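/- Let d ≥ 1 and let S be a finite subset of the unit sphere S^{d-1} ⊂ ℝ^d with |S| = n ≥ 2. Let m = min_{x,y ∈ S, x ≠ y} ‖x − y‖ and let ℓ = ⌈log₂ log₂ (4/m)⌉, and assume ℓ ≥ 1. Let ε > 0 satisfy ε < 1 − |⟨x,y⟩| for all x, y ∈ S with x ≠ y. Then there exists an absolute constant C > 0 (independent of d, S, ε) such that there exist a positive integer N ≤ C · (log n / ε²) · (log₂(4/m))^{2 log₂(π/√2)} and a map φ : S → ℝ^N all of whose coordinates lie in {−1/√N, 1/√N}, such that for all x, y ∈ S, |(2 − 2 g_ℓ(⟨φ(x), φ(y)⟩)) − ‖x − y‖²| ≤ ε ‖x − y‖²; that is, 2 − 2 g_ℓ(⟨φ(x), φ(y)⟩) recovers the squared distance ‖x−y‖² up to a multiplicative (1 ± ε) error. -/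

import Mathlib

/-!
Write `f = (2/π) arcsin`, the inverse of `g` on `[-1, 1]`, and `t = ⟪x, y⟫`.

**Encoding.** A kernel `K` on a finite set is called sign realizable if `K x y` is the expectation of
`s x * s y` for some random vector of signs `s`. If `K` is the Gram matrix of unit vectors, then
`f ∘ K` is sign realizable: take the signs of the inner products with a vector drawn from a
rotation invariant distribution (Grothendieck's identity, `corr_eq_arcsin`). Conversely a sign
realizable kernel is a Gram matrix of unit vectors in a finite-dimensional space
(`SignRealizable.exists_gram`). Alternating the two facts, `f^[ℓ] ⟪x, y⟫` is sign realizable for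
every `ℓ ≥ 1`. Averaging `N` independent copies, Hoeffding's inequality and a union bound give sign
vectors whose normalized inner products approximate `f^[ℓ] ⟪x, y⟫` up to `δ` as soon as
`N δ² ≥ 8 log n` (`SignRealizable.exists_sample`).

Grothendieck's identity is proved by a doubling trick. Let `R(u, w)` be the difference of its two
sides. Reflecting `u` in the line of `w` gives `v` with `R(u, v) = 2 R(u, w)` when `⟪u, w⟫ ≥ 0`, and
`R(u, -w) = -R(u, w)`. So every bound on `|R|` valid for all pairs of unit vectors can be halved;
since `|R| ≤ 2`, `R` vanishes.

**Decoding.** For `0 ≤ b ≤ a ≤ 1` one has `g a - g b ≤ (π/√2) (a - b) √(1 - g b)` and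
`1 - b ≤ √(1 - g b)`, so by induction
`g^[ℓ] a - g^[ℓ] b ≤ (π/√2)^ℓ (a - b) (1 - g^[ℓ] b)^(1 - 2^(-ℓ))`. As `2^ℓ ≥ log₂ (4/m)`, the factor
`(1 - g^[ℓ] b)^(-2^(-ℓ))` is at most `4` once `1 - g^[ℓ] b ≥ m²/2`. Hence an additive error
`δ = ε / (8 (π/√2)^ℓ)` before decoding becomes a relative error `ε` in `1 - t = ‖x - y‖²/2`
(`g_iter_decode`). The value of `N` follows from `ℓ - 1 < log₂ log₂ (4/m)`.
-/

open Real RealInnerProductSpace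

/-- `g(t) = sin(πt/2)`. -/
noncomputable def g (t : ℝ) : ℝ := Real.sin (Real.pi * t / 2)

open MeasureTheory

/-! ### Grothendieck's identity -/

/-- The sign of a real number, with `sgn 0 = 1`, so that its values are always `±1`. -/
noncomputable def sgn (t : ℝ) : ℝ := if 0 ≤ t then 1 else -1

lemma sgn_eq (t : ℝ) : sgn t = 1 ∨ sgn t = -1 := by
  unfold sgn; split_ifs <;> simp

lemma measurable_sgn : Measurable sgn :=
  Measurable.ite measurableSet_Ici measurable_const measurable_const

section Grothendieck

set_option linter.unusedSectionVars false

variable {E : Type*} [NormedAddCommGroup E] [InnerProductSpace ℝ E] [FiniteDimensional ℝ E]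
  [MeasurableSpace E] [BorelSpace E]

variable (E) in
/-- A rotation invariant probability measure that does not charge hyperplanes through the origin;
the uniform distribution on the unit ball is one. -/
lemma exists_invariant_measure : ∃ μ : Measure E, IsProbabilityMeasure μ ∧
    (∀ T : E ≃ₗᵢ[ℝ] E, MeasurePreserving T μ μ) ∧
    ∀ u : E, u ≠ 0 → ∀ᵐ z ∂μ, ⟪u, z⟫ ≠ 0 := by
  have hpos : (volume (Metric.ball (0 : E) 1)) ≠ 0 :=
    (Metric.measure_ball_pos volume (0 : E) one_pos).ne'
  have hfin : (volume (Metric.ball (0 : E) 1)) ≠ ⊤ := measure_ball_lt_top.ne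
  refine ⟨ProbabilityTheory.cond volume (Metric.ball (0 : E) 1),
    ProbabilityTheory.cond_isProbabilityMeasure_of_finite hpos hfin, fun T => ?_, fun u hu => ?_⟩
  · have h := (T.measurePreserving.restrict_preimage
      (Metric.isOpen_ball (x := (0 : E)) (ε := 1)).measurableSet)
    have hb : T ⁻¹' (Metric.ball (0 : E) 1) = Metric.ball 0 1 := by
      ext z; simp
    rw [hb] at h
    exact h.smul_measure _
  · have hne : (ℝ ∙ u)ᗮ ≠ ⊤ := by
      intro h
      have : u ∈ (ℝ ∙ u)ᗮ := h ▸ Submodule.mem_top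
      rw [Submodule.mem_orthogonal_singleton_iff_inner_right] at this
      exact hu (inner_self_eq_zero.1 this)
    have h0 := Measure.addHaar_submodule (volume : Measure E) _ hne
    have h1 : ∀ᵐ z ∂(volume : Measure E), ⟪u, z⟫ ≠ 0 := by
      rw [ae_iff]
      convert h0 using 2
      ext z
      simp [Submodule.mem_orthogonal_singleton_iff_inner_right]
    exact ProbabilityTheory.cond_absolutelyContinuous.ae_le h1

variable (μ : Measure E)

/-- The expectation of the product of the signs of `⟪u, z⟫` and `⟪v, z⟫` for `z` drawn from `μ`. -/
noncomputable def corr (u v : E) : ℝ := ∫ z, sgn ⟪u, z⟫ * sgn ⟪v, z⟫ ∂μ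

lemma measurable_sgn_mul (u v : E) : Measurable fun z : E => sgn ⟪u, z⟫ * sgn ⟪v, z⟫ :=
  (measurable_sgn.comp (by fun_prop)).mul (measurable_sgn.comp (by fun_prop))

lemma abs_sgn_mul (a b : ℝ) : |sgn a * sgn b| = 1 := by
  rcases sgn_eq a with h | h <;> rcases sgn_eq b with h' | h' <;> simp [h, h']

lemma integrable_sgn_mul [IsProbabilityMeasure μ] (u v : E) :
    Integrable (fun z : E => sgn ⟪u, z⟫ * sgn ⟪v, z⟫) μ :=
  Integrable.of_bound (measurable_sgn_mul u v).aestronglyMeasurable 1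
    (.of_forall fun z => by rw [Real.norm_eq_abs, abs_sgn_mul])

lemma abs_corr_le [IsProbabilityMeasure μ] (u v : E) : |corr μ u v| ≤ 1 := by
  have := norm_integral_le_of_norm_le_const (μ := μ)
    (f := fun z : E => sgn ⟪u, z⟫ * sgn ⟪v, z⟫) (C := 1)
    (.of_forall fun z => by rw [Real.norm_eq_abs, abs_sgn_mul])
  simpa [corr] using this

variable {μ}

lemma corr_neg_right (hz : ∀ u : E, u ≠ 0 → ∀ᵐ z ∂μ, ⟪u, z⟫ ≠ 0) (u : E) {v : E} (hv : ‖v‖ = 1) :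
    corr μ u (-v) = - corr μ u v := by
  unfold corr
  rw [← integral_neg]
  apply integral_congr_ae
  filter_upwards [hz v (by rintro rfl; simp at hv)] with z h
  have : sgn (-⟪v, z⟫) = - sgn ⟪v, z⟫ := by
    unfold sgn; split_ifs <;> grind
  simp [inner_neg_left, this]

/-- The vector `v` is the reflection of `u` in the line spanned by `w`, so that `w` bisects the angle
between `u` and `v`. -/
lemma corr_double [IsProbabilityMeasure μ] (hT : ∀ T : E ≃ₗᵢ[ℝ] E, MeasurePreserving T μ μ)
    (hz : ∀ u : E, u ≠ 0 → ∀ᵐ z ∂μ, ⟪u, z⟫ ≠ 0) {u w : E} (hu : ‖u‖ = 1) (hw : ‖w‖ = 1)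
    (hc : 0 ≤ ⟪u, w⟫) :
    ∃ v : E, ‖v‖ = 1 ∧ ⟪u, v⟫ = 2 * ⟪u, w⟫ ^ 2 - 1 ∧ corr μ u v = 2 * corr μ u w - 1 := by
  set T := (ℝ ∙ w).reflection with hTdef
  have hTu : T u = (2 * ⟪u, w⟫) • w - u := by
    rw [hTdef, Submodule.reflection_singleton_apply, hw, real_inner_comm]
    simp [two_smul, two_mul, add_smul]
  have hTw : T w = w := Submodule.reflection_mem_subspace_eq_self (Submodule.mem_span_singleton_self w)
  have hn : ‖T u‖ = 1 := by rw [LinearIsometryEquiv.norm_map, hu]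
  refine ⟨T u, hn, ?_, ?_⟩
  · rw [hTu, inner_sub_right, inner_smul_right, real_inner_self_eq_norm_sq, hu]; ring
  · have h1 : corr μ w (T u) = corr μ u w := by
      unfold corr
      rw [← (hT T).integral_comp T.toHomeomorph.measurableEmbedding]
      congr 1
      ext z
      have hwz : ⟪w, T z⟫ = ⟪w, z⟫ := by
        nth_rw 1 [← hTw]
        rw [LinearIsometryEquiv.inner_map_map]
      rw [LinearIsometryEquiv.inner_map_map, hwz, mul_comm]
    have h2 : corr μ u (T u) = corr μ u w + corr μ w (T u) - 1 := by
      unfold corr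
      rw [← integral_add (integrable_sgn_mul μ _ _) (integrable_sgn_mul μ _ _)]
      have : (1 : ℝ) = ∫ _, 1 ∂μ := by simp
      rw [this, ← integral_sub (by
        exact (integrable_sgn_mul μ u w).add (integrable_sgn_mul μ w (T u))) (integrable_const _)]
      apply integral_congr_ae
      filter_upwards [hz u (by rintro rfl; simp at hu), hz w (by rintro rfl; simp at hw),
        hz (T u) (by intro h; simp [h] at hn)] with z ha hb hd
      have hsum : ⟪u, z⟫ + ⟪T u, z⟫ = 2 * ⟪u, w⟫ * ⟪w, z⟫ := by
        rw [hTu, inner_sub_left, inner_smul_left]; simp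
      generalize ⟪u, z⟫ = a at *
      generalize ⟪w, z⟫ = b at *
      generalize ⟪T u, z⟫ = d at *
      generalize ⟪u, w⟫ = c at *
      -- `a + d = 2 c b` with `c ≥ 0`: if `a` and `d` have the same sign, then so has `b`.
      have p1 : 0 < a → 0 < d → 0 < b := by
        intro h h'; by_contra hh
        nlinarith
      have p2 : a < 0 → d < 0 → b < 0 := by
        intro h h'; by_contra hh
        nlinarith
      simp only [sgn]
      split_ifs <;> grind
    rw [h2, h1]; ring

/-- Grothendieck's identity. -/
lemma corr_eq_arcsin [IsProbabilityMeasure μ] (hT : ∀ T : E ≃ₗᵢ[ℝ] E, MeasurePreserving T μ μ)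
    (hz : ∀ u : E, u ≠ 0 → ∀ᵐ z ∂μ, ⟪u, z⟫ ≠ 0) {u w : E} (hu : ‖u‖ = 1) (hw : ‖w‖ = 1) :
    corr μ u w = 2 / π * arcsin ⟪u, w⟫ := by
  -- The bound on the defect is halved at each step, uniformly over all pairs of unit vectors.
  have key : ∀ k : ℕ, ∀ u w : E, ‖u‖ = 1 → ‖w‖ = 1 →
      |corr μ u w - 2 / π * arcsin ⟪u, w⟫| ≤ 2 * (1 / 2) ^ k := by
    intro k
    induction k with
    | zero =>
      intro u w _ _
      have h1 := abs_corr_le μ u w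
      have h2 : |2 / π * arcsin ⟪u, w⟫| ≤ 1 := by
        rw [abs_mul, abs_of_pos (by positivity), div_mul_eq_mul_div, div_le_one pi_pos]
        have := abs_le.2 ⟨neg_pi_div_two_le_arcsin ⟪u, w⟫, arcsin_le_pi_div_two ⟪u, w⟫⟩
        linarith
      have := abs_sub (corr μ u w) (2 / π * arcsin ⟪u, w⟫)
      norm_num
      linarith
    | succ k ih =>
      have pos : ∀ u w : E, ‖u‖ = 1 → ‖w‖ = 1 → 0 ≤ ⟪u, w⟫ →
          |corr μ u w - 2 / π * arcsin ⟪u, w⟫| ≤ 2 * (1 / 2) ^ (k + 1) := by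
        intro u w hu hw hc
        obtain ⟨v, hv, huv, hcv⟩ := corr_double hT hz hu hw hc
        have h := ih u v hu hv
        have hc1 : ⟪u, w⟫ ≤ 1 := by
          have := real_inner_le_norm u w; rw [hu, hw] at this; linarith
        have ha : arcsin (2 * ⟪u, w⟫ ^ 2 - 1) = 2 * arcsin ⟪u, w⟫ - π / 2 := by
          generalize ⟪u, w⟫ = c at *
          have h3 : 2 * c ^ 2 - 1 = cos (2 * arccos c) := by
            rw [cos_two_mul, cos_arccos (by linarith) hc1]
          rw [arcsin_eq_pi_div_two_sub_arccos, h3, arccos_cos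
            (by linarith [arccos_nonneg c]) (by linarith [arccos_le_pi_div_two.2 hc]),
            arccos_eq_pi_div_two_sub_arcsin]
          ring
        have : corr μ u v - 2 / π * arcsin ⟪u, v⟫ =
            2 * (corr μ u w - 2 / π * arcsin ⟪u, w⟫) := by
          rw [hcv, huv, ha]; field_simp; ring
        rw [this, abs_mul, abs_two] at h
        rw [pow_succ]; linarith
      intro u w hu hw
      rcases le_total 0 ⟪u, w⟫ with hc | hc
      · exact pos u w hu hw hc
      · have h := pos u (-w) hu (by simpa using hw) (by rw [inner_neg_right]; linarith)
        rw [corr_neg_right hz u hw, inner_neg_right, arcsin_neg, ← abs_neg] at h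
        convert h using 2
        ring
  have hlim : Filter.Tendsto (fun k : ℕ => 2 * (1 / 2 : ℝ) ^ k) Filter.atTop (nhds (2 * 0)) :=
    (tendsto_pow_atTop_nhds_zero_of_lt_one (by norm_num) (by norm_num)).const_mul 2
  have := ge_of_tendsto' hlim (fun k => key k u w hu hw)
  rw [mul_zero] at this
  linarith [abs_nonpos_iff.1 this]

end Grothendieck

/-! ### Stability of the iterates of `g` -/

lemma g_diff (a b : ℝ) :
    g a - g b = 2 * sin (π * (a - b) / 4) * cos (π * (a + b) / 4) := by
  unfold g
  rw [sin_sub_sin]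
  rw [show (π * a / 2 - π * b / 2) / 2 = π * (a - b) / 4 by ring,
    show (π * a / 2 + π * b / 2) / 2 = π * (a + b) / 4 by ring]

lemma g_mono {a b : ℝ} (hb : -1 ≤ b) (hba : b ≤ a) (ha : a ≤ 1) : g b ≤ g a := by
  unfold g
  apply sin_le_sin_of_le_of_le_pi_div_two <;> nlinarith [pi_pos]

lemma g_mem {a : ℝ} : g a ∈ Set.Icc (-1 : ℝ) 1 := ⟨neg_one_le_sin _, sin_le_one _⟩

lemma g_zero : g 0 = 0 := by simp [g]
lemma g_one : g 1 = 1 := by simp [g]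

lemma g_iter_mem {a : ℝ} (ha : a ∈ Set.Icc (-1 : ℝ) 1) (k : ℕ) :
    g^[k] a ∈ Set.Icc (-1 : ℝ) 1 := by
  induction k with
  | zero => simpa using ha
  | succ k _ => rw [Function.iterate_succ_apply']; exact g_mem

lemma g_iter_zero (k : ℕ) : g^[k] 0 = 0 := Function.iterate_fixed g_zero k
lemma g_iter_one (k : ℕ) : g^[k] 1 = 1 := Function.iterate_fixed g_one k

lemma g_iter_mono (k : ℕ) {a b : ℝ} (hb : -1 ≤ b) (hba : b ≤ a) (ha : a ≤ 1) :
    g^[k] b ≤ g^[k] a := by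
  induction k with
  | zero => simpa using hba
  | succ k ih =>
    rw [Function.iterate_succ_apply', Function.iterate_succ_apply']
    exact g_mono (g_iter_mem ⟨hb, hba.trans ha⟩ k).1 ih (g_iter_mem ⟨hb.trans hba, ha⟩ k).2

lemma g_lip {a b : ℝ} (hba : b ≤ a) : g a - g b ≤ π / 2 * (a - b) := by
  rw [g_diff]
  have h0 : 0 ≤ π * (a - b) / 4 := by have := sub_nonneg.2 hba; positivity
  have h1 : |sin (π * (a - b) / 4)| ≤ π * (a - b) / 4 := by
    have := abs_sin_le_abs (x := π * (a - b) / 4)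
    rwa [abs_of_nonneg h0] at this
  have h2 := abs_cos_le_one (π * (a + b) / 4)
  have : sin (π * (a - b) / 4) * cos (π * (a + b) / 4) ≤ π * (a - b) / 4 * 1 :=
    (le_abs_self _).trans (by rw [abs_mul]; gcongr)
  linarith

lemma g_lip_sqrt {a b : ℝ} (hb : 0 ≤ b) (hba : b ≤ a) (ha : a ≤ 1) :
    g a - g b ≤ π / √2 * (a - b) * √(1 - g b) := by
  rw [g_diff]
  have h0 : 0 ≤ π * (a - b) / 4 := by have := sub_nonneg.2 hba; positivity
  have h1 : sin (π * (a - b) / 4) ≤ π * (a - b) / 4 := sin_le h0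
  have h2 : cos (π * (a + b) / 4) ≤ cos (π * b / 2) := by
    apply cos_le_cos_of_nonneg_of_le_pi <;> nlinarith [pi_pos]
  have h4 : 0 ≤ cos (π * (a + b) / 4) := by
    apply cos_nonneg_of_neg_pi_div_two_le_of_le <;> nlinarith [pi_pos]
  have h3 : cos (π * b / 2) ≤ √2 * √(1 - g b) := by
    rw [← sqrt_mul zero_le_two]
    apply le_sqrt_of_sq_le
    have := g_mem (a := b)
    have h5 : g b ^ 2 + cos (π * b / 2) ^ 2 = 1 := sin_sq_add_cos_sq _
    nlinarith [this.1, this.2, sq_nonneg (1 - g b)]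
  have h6 : π / √2 = π / 2 * √2 := by
    rw [div_eq_iff (by positivity), mul_assoc, mul_self_sqrt zero_le_two]; ring
  calc 2 * sin (π * (a - b) / 4) * cos (π * (a + b) / 4)
      ≤ 2 * (π * (a - b) / 4) * (√2 * √(1 - g b)) := by
        gcongr
        exact h2.trans h3
    _ = _ := by rw [h6]; ring

lemma one_sub_le_sqrt {b : ℝ} (hb : 0 ≤ b) (hb1 : b ≤ 1) : 1 - b ≤ √(1 - g b) := by
  have h1 : 1 - g b = 2 * sin (π / 4 * (1 - b)) ^ 2 := by
    have : g b = cos (2 * (π / 4 * (1 - b))) := by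
      unfold g; rw [← cos_pi_div_two_sub]; congr 1; ring
    rw [this, cos_two_mul, cos_sq']; ring
  have h2 : (1 - b) * (√2 / 2) ≤ sin (π / 4 * (1 - b)) := by
    have := strictConcaveOn_sin_Icc.concaveOn.2
      (show π / 4 ∈ Set.Icc 0 π from ⟨by positivity, by linarith [pi_pos]⟩)
      (show (0 : ℝ) ∈ Set.Icc 0 π from ⟨le_rfl, pi_pos.le⟩)
      (show 0 ≤ 1 - b by linarith) hb (by ring)
    simp only [smul_eq_mul, sin_pi_div_four, sin_zero, mul_zero, add_zero] at this
    rwa [mul_comm (π / 4)]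
  apply le_sqrt_of_sq_le
  rw [h1]
  have h3 : 0 ≤ (1 - b) * (√2 / 2) := mul_nonneg (by linarith) (by positivity)
  have h4 := pow_le_pow_left₀ h3 h2 2
  have h5 : √2 ^ 2 = 2 := sq_sqrt zero_le_two
  nlinarith

lemma g_iter_lip_nonneg {a b : ℝ} (hb : 0 ≤ b) (hba : b ≤ a) (ha : a ≤ 1) (k : ℕ) :
    g^[k] a - g^[k] b ≤ (π / √2) ^ k * (a - b) * (1 - g^[k] b) ^ (1 - (1 / 2 : ℝ) ^ k) := by
  induction k with
  | zero => simp
  | succ k ih =>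
    rw [Function.iterate_succ_apply', Function.iterate_succ_apply']
    have hB0 : 0 ≤ g^[k] b := by
      have := g_iter_mono k (by norm_num) hb (hba.trans ha)
      rwa [g_iter_zero] at this
    have hB1 : g^[k] b ≤ 1 := (g_iter_mem ⟨by linarith, hba.trans ha⟩ k).2
    have hBA := g_iter_mono k (by linarith) hba ha
    have hA1 : g^[k] a ≤ 1 := (g_iter_mem ⟨by linarith, ha⟩ k).2
    generalize g^[k] a = A at *
    generalize g^[k] b = B at *
    have hq : 0 ≤ 1 - g B := by linarith [(g_mem (a := B)).2]
    have he : 0 ≤ 1 - (1 / 2 : ℝ) ^ k := by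
      linarith [pow_le_one₀ (n := k) (by norm_num : (0 : ℝ) ≤ 1 / 2) (by norm_num)]
    have h1 : (1 - B) ^ (1 - (1 / 2 : ℝ) ^ k) ≤ √(1 - g B) ^ (1 - (1 / 2 : ℝ) ^ k) :=
      rpow_le_rpow (by linarith) (one_sub_le_sqrt hB0 hB1) he
    have h2 : √(1 - g B) ^ (1 - (1 / 2 : ℝ) ^ k) * √(1 - g B) =
        (1 - g B) ^ (1 - (1 / 2 : ℝ) ^ (k + 1)) := by
      rw [sqrt_eq_rpow, ← rpow_mul hq, ← rpow_add_of_nonneg hq (by positivity) (by norm_num)]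
      congr 1; ring
    have hab : 0 ≤ a - b := by linarith
    calc g A - g B ≤ π / √2 * (A - B) * √(1 - g B) := g_lip_sqrt hB0 hBA hA1
      _ ≤ π / √2 * ((π / √2) ^ k * (a - b) * √(1 - g B) ^ (1 - (1 / 2 : ℝ) ^ k)) *
          √(1 - g B) := by
        gcongr
        exact ih.trans (by gcongr)
      _ = (π / √2) ^ (k + 1) * (a - b) *
          (√(1 - g B) ^ (1 - (1 / 2 : ℝ) ^ k) * √(1 - g B)) := by ring
      _ = _ := by rw [h2]

lemma g_iter_lip {a b : ℝ} (hba : b ≤ a) (k : ℕ) (hb : -1 ≤ b) (ha : a ≤ 1) :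
    g^[k] a - g^[k] b ≤ (π / 2) ^ k * (a - b) := by
  induction k with
  | zero => simp
  | succ k ih =>
    rw [Function.iterate_succ_apply', Function.iterate_succ_apply']
    have := g_lip (g_iter_mono k hb hba ha)
    rw [pow_succ', mul_assoc]
    exact this.trans (by gcongr)

/-- The increment of `g^[k]` is controlled relative to `1 - g^[k] b`. For `b ≤ 0` this is immediate from
the Lipschitz constant `(π / 2) ^ k`, since then `1 - g^[k] b ≥ 1`. -/
lemma g_iter_rel_lip {a b : ℝ} (hb : -1 ≤ b) (hba : b ≤ a) (ha : a ≤ 1) (k : ℕ)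
    (hq : (1 / 4 : ℝ) ^ (2 ^ k : ℕ) ≤ 1 - g^[k] b) :
    g^[k] a - g^[k] b ≤ 4 * (π / √2) ^ k * (a - b) * (1 - g^[k] b) := by
  have hab : 0 ≤ a - b := by linarith
  rcases le_total 0 b with h | h
  · have hq0 : 0 < 1 - g^[k] b := lt_of_lt_of_le (by positivity) hq
    refine (g_iter_lip_nonneg h hba ha k).trans ?_
    generalize 1 - g^[k] b = q at *
    have h1 : (1 / 4 : ℝ) ≤ q ^ ((1 / 2 : ℝ) ^ k) := by
      have := rpow_le_rpow (by positivity) hq (z := (1 / 2 : ℝ) ^ k) (by positivity)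
      rwa [← rpow_natCast, ← rpow_mul (by norm_num), Nat.cast_pow, Nat.cast_ofNat, ← mul_pow,
        mul_one_div_cancel two_ne_zero, one_pow, rpow_one] at this
    have h2 : q ^ (1 - (1 / 2 : ℝ) ^ k) ≤ 4 * q := by
      rw [rpow_sub hq0, rpow_one, div_le_iff₀ (by positivity)]
      nlinarith
    calc _ ≤ (π / √2) ^ k * (a - b) * (4 * q) := by gcongr
      _ = _ := by ring
  · have hB : g^[k] b ≤ 0 := by
      have := g_iter_mono k hb h (by norm_num)
      rwa [g_iter_zero] at this
    have h2 : π / 2 ≤ π / √2 := by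
      gcongr
      rw [sqrt_le_left (by norm_num)]; norm_num
    have h3 := pow_le_pow_left₀ (by positivity) h2 k
    have h4 : 0 ≤ (π / √2) ^ k * (a - b) := by positivity
    have h5 := mul_le_mul_of_nonneg_right h3 hab
    have := g_iter_lip hba k hb ha
    nlinarith

/-- An additive error `ε / (8 (π / √2) ^ k)` in the argument becomes a relative error `ε` in
`1 - g^[k] b`. The factor `8` leaves room for `a < b`, where the increment is first bounded relative to
`1 - g^[k] a`. -/
lemma g_iter_decode {a b : ℝ} (ha : a ∈ Set.Icc (-1 : ℝ) 1) (hb : b ∈ Set.Icc (-1 : ℝ) 1)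
    (k : ℕ) {ε : ℝ} (hε : ε ≤ 1) (hq : (1 / 4 : ℝ) ^ (2 ^ k : ℕ) ≤ 1 - g^[k] b)
    (hab : |a - b| ≤ ε / (8 * (π / √2) ^ k)) :
    |g^[k] a - g^[k] b| ≤ ε * (1 - g^[k] b) := by
  have hK : 0 < (π / √2) ^ k := by positivity
  rw [le_div_iff₀ (by positivity)] at hab
  have hq0 : 0 < 1 - g^[k] b := lt_of_lt_of_le (by positivity) hq
  rcases le_total b a with h | h
  · have h1 := g_iter_rel_lip hb.1 h ha.2 k hq
    have h2 := g_iter_mono k hb.1 h ha.2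
    rw [abs_of_nonneg (by linarith)] at hab
    rw [abs_of_nonneg (by linarith)]
    refine h1.trans ?_
    gcongr
    nlinarith
  · have h2 := g_iter_mono k ha.1 h hb.2
    have h1 := g_iter_rel_lip ha.1 h hb.2 k (by linarith)
    rw [abs_of_nonpos (by linarith)] at hab
    rw [abs_of_nonpos (by linarith)]
    have h3 : 4 * (π / √2) ^ k * (b - a) ≤ ε / 2 := by nlinarith
    have h4 := h1.trans (mul_le_mul_of_nonneg_right h3 (by linarith))
    nlinarith

/-! ### Sign realizable kernels -/

/-- The inverse `f(t) = (2/π) arcsin t` of `g` on `[-1, 1]`. -/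
noncomputable def f (t : ℝ) : ℝ := 2 / π * arcsin t

lemma f_mem (t : ℝ) : f t ∈ Set.Icc (-1 : ℝ) 1 := by
  have h1 := neg_pi_div_two_le_arcsin t
  have h2 := arcsin_le_pi_div_two t
  have hp := pi_pos
  unfold f
  rw [div_mul_eq_mul_div]
  constructor
  · rw [le_div_iff₀ hp]; linarith
  · rw [div_le_iff₀ hp]; linarith

lemma g_f {t : ℝ} (ht : t ∈ Set.Icc (-1 : ℝ) 1) : g (f t) = t := by
  unfold g f
  rw [show π * (2 / π * arcsin t) / 2 = arcsin t by field_simp]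
  exact sin_arcsin ht.1 ht.2

lemma f_iter_mem {t : ℝ} (ht : t ∈ Set.Icc (-1 : ℝ) 1) (k : ℕ) :
    f^[k] t ∈ Set.Icc (-1 : ℝ) 1 := by
  induction k with
  | zero => simpa using ht
  | succ k _ => rw [Function.iterate_succ_apply']; exact f_mem _

lemma g_iter_f_iter {t : ℝ} (ht : t ∈ Set.Icc (-1 : ℝ) 1) (k : ℕ) : g^[k] (f^[k] t) = t := by
  induction k with
  | zero => rfl
  | succ k ih =>
    rw [Function.iterate_succ_apply, Function.iterate_succ_apply', g_f (f_iter_mem ht k), ih]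

/-- The sign `±1` encoded by a Boolean. -/
noncomputable def bsgn (b : Bool) : ℝ := if b then 1 else -1

lemma bsgn_mul_self (b : Bool) : bsgn b * bsgn b = 1 := by cases b <;> simp [bsgn]

lemma bsgn_decide (t : ℝ) : bsgn (decide (0 ≤ t)) = sgn t := by simp [bsgn, sgn]

/-- `K x y` is the expectation of the product of the entries at `x` and `y` of a random vector of signs
indexed by `X`; the vectors of signs are encoded as functions `X → Bool`. -/
def SignRealizable {X : Type*} (K : X → X → ℝ) : Prop :=
  ∃ ν : Measure (X → Bool), IsProbabilityMeasure ν ∧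
    ∀ x y, ∫ σ, bsgn (σ x) * bsgn (σ y) ∂ν = K x y

lemma SignRealizable.of_gram {X : Type*} [Fintype X] {E : Type*} [NormedAddCommGroup E]
    [InnerProductSpace ℝ E] [FiniteDimensional ℝ E] (u : X → E) (hu : ∀ x, ‖u x‖ = 1) :
    SignRealizable fun x y => f ⟪u x, u y⟫ := by
  borelize E
  obtain ⟨μ, hμ, hT, hz⟩ := exists_invariant_measure E
  have hm : Measurable fun (z : E) (x : X) => decide (0 ≤ ⟪u x, z⟫) := by
    refine measurable_pi_lambda _ fun x => ?_
    have hs : MeasurableSet {z : E | 0 ≤ ⟪u x, z⟫} :=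
      measurableSet_le measurable_const (by fun_prop)
    refine measurable_to_bool ?_
    convert hs using 1
    ext z
    simp
  refine ⟨μ.map fun z x => decide (0 ≤ ⟪u x, z⟫), Measure.isProbabilityMeasure_map hm.aemeasurable,
    fun x y => ?_⟩
  rw [integral_map hm.aemeasurable (measurable_of_finite _).aestronglyMeasurable]
  simp only [bsgn_decide]
  exact corr_eq_arcsin hT hz (hu x) (hu y)

/-- The Gram vectors are the random signs themselves, seen in `L²` of the finite probability space
of all sign patterns. -/
lemma SignRealizable.exists_gram {X : Type*} [Fintype X] [DecidableEq X] {K : X → X → ℝ}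
    (h : SignRealizable K) :
    ∃ u : X → EuclideanSpace ℝ (X → Bool), (∀ x, ‖u x‖ = 1) ∧ ∀ x y, ⟪u x, u y⟫ = K x y := by
  obtain ⟨ν, hν, hK⟩ := h
  have hin : ∀ x y, ⟪(WithLp.toLp 2 fun σ : X → Bool => √(ν.real {σ}) * bsgn (σ x) :
      EuclideanSpace ℝ (X → Bool)), WithLp.toLp 2 fun σ => √(ν.real {σ}) * bsgn (σ y)⟫ = K x y := by
    intro x y
    rw [← hK, integral_fintype (Integrable.of_finite), PiLp.inner_apply]
    refine Finset.sum_congr rfl fun σ _ => ?_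
    have := mul_self_sqrt (measureReal_nonneg (μ := ν) (s := {σ}))
    simp only [RCLike.inner_apply, conj_trivial, smul_eq_mul]
    linear_combination bsgn (σ x) * bsgn (σ y) * this
  refine ⟨fun x => WithLp.toLp 2 fun σ => √(ν.real {σ}) * bsgn (σ x), fun x => ?_, hin⟩
  have h1 := hin x x
  rw [real_inner_self_eq_norm_sq, ← hK] at h1
  simp only [bsgn_mul_self, integral_const, probReal_univ, smul_eq_mul, mul_one] at h1
  exact (pow_eq_one_iff_of_nonneg (norm_nonneg _) two_ne_zero).1 h1

lemma signRealizable_f_iter {X : Type*} [Fintype X] [DecidableEq X] {E : Type*}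
    [NormedAddCommGroup E] [InnerProductSpace ℝ E] [FiniteDimensional ℝ E] (u : X → E)
    (hu : ∀ x, ‖u x‖ = 1) (k : ℕ) : SignRealizable fun x y => f^[k + 1] ⟪u x, u y⟫ := by
  induction k with
  | zero => exact SignRealizable.of_gram u hu
  | succ k ih =>
    obtain ⟨v, hv, hvK⟩ := ih.exists_gram
    have := SignRealizable.of_gram v hv
    simp only [hvK] at this
    simpa only [Function.iterate_succ_apply' f (k + 1)] using this

/-! ### Sampling -/

lemma hoeffding_sign {Ω : Type*} [MeasurableSpace Ω] (ν : Measure Ω) [IsProbabilityMeasure ν]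
    {Z : Ω → ℝ} (hZm : Measurable Z) (hZ : ∀ ω, Z ω ∈ Set.Icc (-1 : ℝ) 1) (N : ℕ) {δ : ℝ}
    (hδ : 0 ≤ δ) :
    (Measure.pi fun _ : Fin N => ν).real {ω | N * δ ≤ ∑ i, (Z (ω i) - ∫ z, Z z ∂ν)} ≤
      exp (-(N * δ ^ 2 / 2)) := by
  have hind := ProbabilityTheory.iIndepFun_pi (μ := fun _ : Fin N => ν)
    (X := fun _ ω => Z ω - ∫ z, Z z ∂ν) (fun _ => (hZm.sub_const _).aemeasurable)
  have hsub := ProbabilityTheory.hasSubgaussianMGF_of_mem_Icc (μ := ν) hZm.aemeasurable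
    (.of_forall hZ)
  have hsub' : ∀ i ∈ (Finset.univ : Finset (Fin N)), ProbabilityTheory.HasSubgaussianMGF
      (fun ω : Fin N → Ω => Z (ω i) - ∫ z, Z z ∂ν) ((‖(1 : ℝ) - (-1)‖₊ / 2) ^ 2)
      (Measure.pi fun _ : Fin N => ν) := by
    intro i _
    have hmp := measurePreserving_eval (fun _ : Fin N => ν) i
    rw [← hmp.map_eq] at hsub
    have := hsub.of_map hmp.measurable.aemeasurable
    rw [hmp.map_eq] at this
    exact this
  have h := ProbabilityTheory.HasSubgaussianMGF.measure_sum_ge_le_of_iIndepFun hind hsub'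
    (ε := N * δ) (by positivity)
  refine h.trans (le_of_eq ?_)
  have h2 : ‖(1 : ℝ) - (-1)‖₊ = 2 := by
    ext; simp; norm_num
  rw [h2]
  rcases Nat.eq_zero_or_pos N with rfl | hN
  · simp
  · congr 1
    have : (N : ℝ) ≠ 0 := by positivity
    simp
    field_simp

lemma SignRealizable.exists_sample {X : Type*} [Fintype X] {K : X → X → ℝ}
    (h : SignRealizable K) {N : ℕ} {δ : ℝ} (hN : 0 < N) (hδ : 0 < δ) (hX : 2 ≤ Fintype.card X)
    (hNδ : 8 * log (Fintype.card X) ≤ N * δ ^ 2) :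
    ∃ ω : Fin N → X → Bool, ∀ x y,
      |(∑ i, bsgn (ω i x) * bsgn (ω i y)) / N - K x y| ≤ δ := by
  obtain ⟨ν, hν, hK⟩ := h
  set P := Measure.pi fun _ : Fin N => ν with hP
  set n := Fintype.card X with hn
  let Z : Bool → X × X → (X → Bool) → ℝ := fun s p σ => bsgn s * (bsgn (σ p.1) * bsgn (σ p.2))
  -- `bad (s, (x, y))`: the empirical mean at `(x, y)` is off by at least `δ`, above if `s = true` and
  -- below if `s = false`.
  let bad : Bool × (X × X) → Set (Fin N → X → Bool) := fun q =>
    {ω | N * δ ≤ ∑ i, (Z q.1 q.2 (ω i) - ∫ σ, Z q.1 q.2 σ ∂ν)}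
  have hbad : ∀ q, P.real (bad q) ≤ exp (-(4 * log n)) := by
    intro q
    refine (hoeffding_sign ν (Z := Z q.1 q.2) (measurable_of_finite _) (fun σ => ?_) N hδ.le).trans ?_
    · simp only [Z, bsgn]
      constructor <;> split_ifs <;> norm_num
    · apply exp_le_exp.2; linarith
  have hn0 : (0 : ℝ) < n := by positivity
  have hexp : exp (-(4 * log n)) = ((n : ℝ) ^ 4)⁻¹ := by
    rw [exp_neg, show 4 * log (n : ℝ) = log ((n : ℝ) ^ 4) by rw [log_pow]; norm_num,
      exp_log (by positivity)]
  have hunion : P.real (⋃ q, bad q) < 1 := by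
    calc P.real (⋃ q, bad q) ≤ ∑ q, P.real (bad q) := measureReal_iUnion_fintype_le _
      _ ≤ ∑ _q : Bool × (X × X), ((n : ℝ) ^ 4)⁻¹ :=
        Finset.sum_le_sum fun q _ => (hbad q).trans_eq hexp
      _ = 2 / (n : ℝ) ^ 2 := by
        simp only [Finset.sum_const, Finset.card_univ, Fintype.card_prod, Fintype.card_bool,
          nsmul_eq_mul, ← hn]
        push_cast
        field_simp
      _ < 1 := by
        have : (2 : ℝ) ≤ n := by exact_mod_cast hX
        rw [div_lt_one (by positivity)]
        nlinarith
  have hne : ∃ ω, ω ∉ ⋃ q, bad q := by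
    by_contra! hcon
    rw [Set.eq_univ_of_forall hcon, probReal_univ] at hunion
    exact lt_irrefl _ hunion
  obtain ⟨ω, hω⟩ := hne
  simp only [Set.mem_iUnion, not_exists] at hω
  refine ⟨ω, fun x y => ?_⟩
  have hN0 : (0 : ℝ) < N := by exact_mod_cast hN
  have e : ∀ s, ∑ i, (Z s (x, y) (ω i) - ∫ σ, Z s (x, y) σ ∂ν) =
      bsgn s * (∑ i, bsgn (ω i x) * bsgn (ω i y) - N * K x y) := by
    intro s
    simp only [Z, integral_const_mul, hK, Finset.sum_sub_distrib, ← Finset.mul_sum,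
      Finset.sum_const, Finset.card_univ, Fintype.card_fin, nsmul_eq_mul]
    ring
  have h1 := hω (true, (x, y))
  have h2 := hω (false, (x, y))
  simp only [bad, Set.mem_ofPred_eq, e, not_le] at h1 h2
  rw [show bsgn true = 1 by simp [bsgn]] at h1
  rw [show bsgn false = -1 by simp [bsgn]] at h2
  rw [div_sub' hN0.ne', abs_div, abs_of_pos hN0, div_le_iff₀ hN0, abs_le]
  constructor <;> linarith

/-! ### Parameters and conclusion -/

/-- The choice `k ≥ log₂ log₂ (4/m)` puts `m² / 2` above the threshold `4 ^ (-2 ^ k)` needed for decoding. -/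
lemma quarter_pow_le {m : ℝ} {k : ℕ} (hm : 0 < m)
    (hk : logb 2 (logb 2 (4 / m)) ≤ k) (hL : 0 < logb 2 (4 / m)) :
    (1 / 4 : ℝ) ^ (2 ^ k : ℕ) ≤ m ^ 2 / 2 := by
  have h1 : logb 2 (4 / m) ≤ 2 ^ k := by
    rw [logb_le_iff_le_rpow (by norm_num) hL, rpow_natCast] at hk
    exact hk
  have h2 : 4 / m ≤ 2 ^ (2 ^ k : ℕ) := by
    rw [logb_le_iff_le_rpow (by norm_num) (by positivity)] at h1
    rw [← rpow_natCast]
    push_cast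
    exact h1
  have h3 : (1 / 2 : ℝ) ^ (2 ^ k : ℕ) ≤ m / 4 := by
    rw [one_div, inv_pow, inv_le_comm₀ (by positivity) (by positivity), inv_div]
    exact h2
  have h4 : (1 / 4 : ℝ) ^ (2 ^ k : ℕ) = ((1 / 2 : ℝ) ^ (2 ^ k : ℕ)) ^ 2 := by
    rw [← pow_mul, mul_comm, pow_mul]; norm_num
  rw [h4]
  have := pow_le_pow_left₀ (by positivity) h3 2
  nlinarith

lemma pow_le_rpow_logb {L : ℝ} {k : ℕ} (hL : 0 < L) (hk : (k : ℝ) - 1 ≤ logb 2 L) :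
    ((π / √2) ^ k) ^ 2 ≤ π ^ 2 / 2 * L ^ (2 * logb 2 (π / √2)) := by
  have hp : 0 < π / √2 := by positivity
  have h1 : 1 ≤ π / √2 := by
    rw [one_le_div (by positivity), sqrt_le_left (by positivity)]
    nlinarith [pi_gt_three]
  have e1 : L ^ (2 * logb 2 (π / √2)) = (π / √2) ^ (2 * logb 2 L) := by
    rw [rpow_def_of_pos hL, rpow_def_of_pos hp]
    congr 1
    simp only [logb]; ring
  have e2 : π ^ 2 / 2 = (π / √2) ^ (2 : ℝ) := by
    rw [rpow_two, div_pow, sq_sqrt zero_le_two]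
  rw [e1, e2, ← rpow_add hp, ← pow_mul, ← rpow_natCast]
  apply rpow_le_rpow_of_exponent_le h1
  push_cast
  linarith

/-- There is an absolute constant `C > 0` such that: for any set `S` of `n ≥ 2` unit
vectors in `ℝ^d`, with `m` the minimum pairwise distance, `ℓ = ⌈log₂ log₂ (4/m)⌉ ≥ 1`,
and `ε > 0` with `ε < 1 − |⟨x,y⟩|` for all distinct `x, y ∈ S`, there are a positive
integer `N ≤ C·(log n / ε²)·(log₂(4/m))^{2 log₂(π/√2)}` and a map
`φ : S → N^{-1/2}{−1,1}^N` such that `2 − 2g_ℓ(⟨φ(x),φ(y)⟩)` recovers `‖x−y‖²`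
up to a multiplicative `(1 ± ε)` error for all `x, y ∈ S`. -/
theorem sphere_sketch :
    ∃ C : ℝ, 0 < C ∧
      ∀ (d n : ℕ) (S : Finset (EuclideanSpace ℝ (Fin d))) (m ε : ℝ) (ℓ : ℕ),
        1 ≤ d → S.card = n → 2 ≤ n →
        (∀ x ∈ S, ‖x‖ = 1) →
        IsLeast {t : ℝ | ∃ x ∈ S, ∃ y ∈ S, x ≠ y ∧ t = ‖x - y‖} m →
        (ℓ : ℤ) = ⌈Real.logb 2 (Real.logb 2 (4 / m))⌉ →
        1 ≤ ℓ →
        0 < ε →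
        (∀ x ∈ S, ∀ y ∈ S, x ≠ y → ε < 1 - |⟪x, y⟫|) →
        ∃ N : ℕ, 0 < N ∧
          (N : ℝ) ≤ C * (Real.log n / ε ^ 2) *
            Real.logb 2 (4 / m) ^ (2 * Real.logb 2 (Real.pi / Real.sqrt 2)) ∧
          ∃ φ : EuclideanSpace ℝ (Fin d) → EuclideanSpace ℝ (Fin N),
            (∀ x ∈ S, ∀ i, φ x i = 1 / Real.sqrt N ∨ φ x i = -(1 / Real.sqrt N)) ∧
            ∀ x ∈ S, ∀ y ∈ S,
              |(2 - 2 * g^[ℓ] ⟪φ x, φ y⟫) - ‖x - y‖ ^ 2| ≤ ε * ‖x - y‖ ^ 2 := by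
  -- `512 = 8 * 8²` comes from `N ≈ 8 log n / δ²`, the additional `2` absorbs the rounding up to an
  -- integer, and `π² / 2` pays for `2 ^ (ℓ - 1) < log₂ (4/m)` in place of `2 ^ ℓ`.
  refine ⟨514 * (π ^ 2 / 2), by positivity, ?_⟩
  rintro d n S m ε ℓ - hSn hn hS ⟨⟨x₀, hx₀, y₀, hy₀, hxy₀, hm⟩, hmin⟩ hℓ hℓ1 hε hεS
  have hm0 : 0 < m := by rw [hm]; exact norm_pos_iff.2 (sub_ne_zero.2 hxy₀)
  have hm2 : m ≤ 2 := by
    rw [hm]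
    have := norm_sub_le x₀ y₀
    rw [hS _ hx₀, hS _ hy₀] at this
    linarith
  have hε1 : ε ≤ 1 := by linarith [hεS x₀ hx₀ y₀ hy₀ hxy₀, abs_nonneg ⟪x₀, y₀⟫]
  set L := logb 2 (4 / m) with hLdef
  have hL : 1 ≤ L := by
    rw [hLdef, le_logb_iff_rpow_le (by norm_num) (by positivity), rpow_one,
      le_div_iff₀ hm0]
    linarith
  have hceil1 : logb 2 L ≤ ℓ := by
    have := Int.le_ceil (logb 2 L)
    rw [← hℓ] at this
    exact_mod_cast this
  have hceil2 : (ℓ : ℝ) - 1 ≤ logb 2 L := by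
    have := Int.ceil_lt_add_one (logb 2 L)
    rw [← hℓ] at this
    push_cast at this
    linarith
  have hquart := quarter_pow_le hm0 hceil1 (by linarith)
  have hLpow := pow_le_rpow_logb (by linarith) hceil2
  set W := L ^ (2 * logb 2 (π / √2))
  have hK1 : 1 ≤ ((π / √2) ^ ℓ) ^ 2 := by
    apply one_le_pow₀
    apply one_le_pow₀
    rw [one_le_div (by positivity), sqrt_le_left (by positivity)]
    nlinarith [pi_gt_three]
  set Q := (π / √2) ^ ℓ with hQ
  have hQ0 : 0 < Q := by positivity
  set δ := ε / (8 * Q) with hδ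
  have hδ0 : 0 < δ := by positivity
  have hlog : 1 / 2 ≤ log n := by
    have h1 : log 2 ≤ log n := log_le_log (by norm_num) (by exact_mod_cast hn)
    linarith [log_two_gt_d9]
  set N := ⌈8 * log n / δ ^ 2⌉₊ with hNdef
  have hNpos : 0 < N := Nat.ceil_pos.2 (by positivity)
  have hN0 : (0 : ℝ) < N := by exact_mod_cast hNpos
  have hNge : 8 * log n ≤ N * δ ^ 2 := by
    rw [← div_le_iff₀ (by positivity)]
    exact Nat.le_ceil _
  refine ⟨N, hNpos, ?_, ?_⟩
  · have h1 : (N : ℝ) ≤ 8 * log n / δ ^ 2 + 1 := (Nat.ceil_lt_add_one (by positivity)).le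
    have h2 : 8 * log n / δ ^ 2 = 512 * (log n / ε ^ 2) * Q ^ 2 := by
      rw [hδ]; field_simp; norm_num
    have h3 : 1 / 2 ≤ log n / ε ^ 2 := by
      rw [le_div_iff₀ (by positivity)]
      have : ε ^ 2 ≤ 1 := pow_le_one₀ hε.le hε1
      linarith
    calc (N : ℝ) ≤ 514 * (log n / ε ^ 2) * Q ^ 2 := by nlinarith
      _ ≤ 514 * (log n / ε ^ 2) * (π ^ 2 / 2 * W) := by gcongr
      _ = _ := by ring
  obtain ⟨k, rfl⟩ : ∃ k, ℓ = k + 1 := ⟨ℓ - 1, by omega⟩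
  have hreal := signRealizable_f_iter (fun x : S => (x : EuclideanSpace ℝ (Fin d)))
    (fun x => hS x x.2) k
  obtain ⟨ω, hω⟩ := hreal.exists_sample hNpos hδ0 (by simpa [hSn] using hn)
    (by simpa [hSn] using hNge)
  classical
  let φ : EuclideanSpace ℝ (Fin d) → EuclideanSpace ℝ (Fin N) := fun x =>
    WithLp.toLp 2 fun i => if h : x ∈ S then bsgn (ω i ⟨x, h⟩) / √N else 0
  have hφ : ∀ x (hx : x ∈ S) i, φ x i = bsgn (ω i ⟨x, hx⟩) / √N := by
    intro x hx i
    simp [φ, hx]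
  have hin : ∀ x (hx : x ∈ S) y (hy : y ∈ S),
      ⟪φ x, φ y⟫ = (∑ i, bsgn (ω i ⟨x, hx⟩) * bsgn (ω i ⟨y, hy⟩)) / N := by
    intro x hx y hy
    rw [PiLp.inner_apply, Finset.sum_div]
    refine Finset.sum_congr rfl fun i _ => ?_
    rw [hφ x hx, hφ y hy]
    simp only [RCLike.inner_apply, conj_trivial]
    rw [div_mul_div_comm, mul_self_sqrt hN0.le, mul_comm]
  have hself : ∀ x ∈ S, ⟪φ x, φ x⟫ = 1 := by
    intro x hx
    rw [hin x hx x hx]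
    simp [bsgn_mul_self, hN0.ne']
  refine ⟨φ, fun x hx i => ?_, fun x hx y hy => ?_⟩
  · rw [hφ x hx]
    cases ω i ⟨x, hx⟩
    · right; simp [bsgn, neg_div]
    · left; simp [bsgn]
  by_cases hxy : x = y
  · subst hxy
    rw [hself x hx, g_iter_one]
    simp
  have hnorm : ‖x - y‖ ^ 2 = 2 * (1 - ⟪x, y⟫) := by
    rw [norm_sub_sq_real, hS x hx, hS y hy]; ring
  have ht : ⟪x, y⟫ ∈ Set.Icc (-1 : ℝ) 1 := by
    have := abs_real_inner_le_norm x y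
    rw [hS x hx, hS y hy, mul_one] at this
    exact abs_le.1 this
  have hφn : ∀ x ∈ S, ‖φ x‖ = 1 := by
    intro x hx
    have := hself x hx
    rw [real_inner_self_eq_norm_sq] at this
    exact (pow_eq_one_iff_of_nonneg (norm_nonneg _) two_ne_zero).1 this
  have hs : ⟪φ x, φ y⟫ ∈ Set.Icc (-1 : ℝ) 1 := by
    have := abs_real_inner_le_norm (φ x) (φ y)
    rw [hφn x hx, hφn y hy, mul_one] at this
    exact abs_le.1 this
  have hgf := g_iter_f_iter ht (k + 1)
  have hclose : |⟪φ x, φ y⟫ - f^[k + 1] ⟪x, y⟫| ≤ ε / (8 * (π / √2) ^ (k + 1)) := by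
    rw [hin x hx y hy]
    exact hω ⟨x, hx⟩ ⟨y, hy⟩
  have hmxy : m ^ 2 ≤ ‖x - y‖ ^ 2 :=
    pow_le_pow_left₀ hm0.le (hmin ⟨x, hx, y, hy, hxy, rfl⟩) 2
  have hdec := g_iter_decode hs (f_iter_mem ht (k + 1)) (k + 1) hε1
    (by rw [hgf]; linarith) hclose
  rw [hgf] at hdec
  rw [hnorm]
  calc |2 - 2 * g^[k + 1] ⟪φ x, φ y⟫ - 2 * (1 - ⟪x, y⟫)|
      = 2 * |g^[k + 1] ⟪φ x, φ y⟫ - ⟪x, y⟫| := by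
        rw [← abs_two, ← abs_mul, ← abs_neg, abs_two]; congr 1; ring
    _ ≤ ε * (2 * (1 - ⟪x, y⟫)) := by linarith
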